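/- Assume N ≥ 2. For all u₁, u₂ ∈ ℝ^N with u₁ᵀ𝟙 = u₂ᵀ𝟙 = 0, one has u₁ᵀL₁u₁ + u₂ᵀL₂u₂ ≥ (1/2) · min{λ₂(L₁), λ₂(L₂)} · ‖u₁ + u₂‖². Consequently, for every budget c with 0 ≤ c ≤ (N/2) · min{λ₂(L₁), λ₂(L₂)}, the uniform weights w = (c/N)𝟙 satisfy λ₂(L(w)) = 2c/N (i.e., the threshold budget c* is at least (N/2)·min{λ₂(L₁), λ₂(L₂)}, and in particular is strictly positive when both layers are connected). -/

import Mathlib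

open Matrix

/-- The supra-Laplacian of a two-layer multiplex with layer Laplacians `L₁`, `L₂`
and one-to-one inter-layer weights `w`: the block matrix
`[[L₁ + W, −W], [−W, L₂ + W]]` with `W = diag w`. -/
noncomputable def supraLaplacian {N : ℕ} (L₁ L₂ : Matrix (Fin N) (Fin N) ℝ)
    (w : Fin N → ℝ) : Matrix (Fin N ⊕ Fin N) (Fin N ⊕ Fin N) ℝ :=
  Matrix.fromBlocks (L₁ + Matrix.diagonal w) (-Matrix.diagonal w)
    (-Matrix.diagonal w) (L₂ + Matrix.diagonal w)

/-- Algebraic connectivity: the minimum of `vᵀ M v` over unit vectors `v`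
orthogonal to the all-ones vector (the minimum is attained, so it equals the inf). -/
noncomputable def lambda2 {n : Type*} [Fintype n] (M : Matrix n n ℝ) : ℝ :=
  sInf {x : ℝ | ∃ v : n → ℝ, v ⬝ᵥ v = 1 ∧ v ⬝ᵥ (fun _ => 1) = 0 ∧ x = v ⬝ᵥ M *ᵥ v}

lemma psd_nonneg {n : Type*} [Fintype n] {L : Matrix n n ℝ} (hL : L.PosSemidef) (v : n → ℝ) :
    0 ≤ v ⬝ᵥ L *ᵥ v := by
  simpa using hL.dotProduct_mulVec_nonneg v

lemma lambda2_nonneg {n : Type*} [Fintype n] {L : Matrix n n ℝ} (hL : L.PosSemidef) :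
    0 ≤ lambda2 L := by
  apply Real.sInf_nonneg
  rintro x ⟨v, -, -, rfl⟩
  exact psd_nonneg hL v

lemma lambda2_mul_le {n : Type*} [Fintype n] {L : Matrix n n ℝ} (hL : L.PosSemidef)
    (v : n → ℝ) (hv : v ⬝ᵥ (fun _ => 1) = 0) : lambda2 L * (v ⬝ᵥ v) ≤ v ⬝ᵥ L *ᵥ v := by
  have h0 : 0 ≤ v ⬝ᵥ v := Finset.sum_nonneg (fun i _ => mul_self_nonneg (v i))
  rcases h0.eq_or_lt with h | h
  · rw [← h, mul_zero]
    exact psd_nonneg hL v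
  · have hs : 0 < √(v ⬝ᵥ v) := Real.sqrt_pos.mpr h
    have hss : √(v ⬝ᵥ v) * √(v ⬝ᵥ v) = v ⬝ᵥ v := Real.mul_self_sqrt h0
    have key : lambda2 L ≤ (v ⬝ᵥ L *ᵥ v) / (v ⬝ᵥ v) := by
      apply csInf_le
      · refine ⟨0, ?_⟩
        rintro x ⟨w, -, -, rfl⟩
        exact psd_nonneg hL w
      · refine ⟨(√(v ⬝ᵥ v))⁻¹ • v, ?_, ?_, ?_⟩
        · rw [smul_dotProduct, dotProduct_smul, smul_eq_mul, smul_eq_mul]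
          nth_rewrite 3 [← hss]
          field_simp
        · rw [smul_dotProduct, hv, smul_zero]
        · rw [mulVec_smul, smul_dotProduct, dotProduct_smul, smul_eq_mul, smul_eq_mul]
          have hss' : (√(v ⬝ᵥ v))⁻¹ * (√(v ⬝ᵥ v))⁻¹ = (v ⬝ᵥ v)⁻¹ := by rw [← mul_inv, hss]
          rw [← mul_assoc, hss', div_eq_inv_mul]
    rwa [le_div_iff₀ h] at key

lemma part_one {N : ℕ} {L₁ L₂ : Matrix (Fin N) (Fin N) ℝ}
    (hL₁ : L₁.PosSemidef) (hL₂ : L₂.PosSemidef) (u₁ u₂ : Fin N → ℝ)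
    (h₁ : u₁ ⬝ᵥ (fun _ => 1) = 0) (h₂ : u₂ ⬝ᵥ (fun _ => 1) = 0) :
    (1 / 2) * min (lambda2 L₁) (lambda2 L₂) * ((u₁ + u₂) ⬝ᵥ (u₁ + u₂)) ≤
      u₁ ⬝ᵥ L₁ *ᵥ u₁ + u₂ ⬝ᵥ L₂ *ᵥ u₂ := by
  have a₁ := lambda2_mul_le hL₁ u₁ h₁
  have a₂ := lambda2_mul_le hL₂ u₂ h₂
  have hm : 0 ≤ min (lambda2 L₁) (lambda2 L₂) := le_min (lambda2_nonneg hL₁) (lambda2_nonneg hL₂)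
  have hm1 := min_le_left (lambda2 L₁) (lambda2 L₂)
  have hm2 := min_le_right (lambda2 L₁) (lambda2 L₂)
  set m := min (lambda2 L₁) (lambda2 L₂)
  have n1 : 0 ≤ u₁ ⬝ᵥ u₁ := Finset.sum_nonneg (fun i _ => mul_self_nonneg (u₁ i))
  have n2 : 0 ≤ u₂ ⬝ᵥ u₂ := Finset.sum_nonneg (fun i _ => mul_self_nonneg (u₂ i))
  have n3 : 0 ≤ (u₁ - u₂) ⬝ᵥ (u₁ - u₂) :=
    Finset.sum_nonneg (fun i _ => mul_self_nonneg ((u₁ - u₂) i))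
  have e : (u₁ + u₂) ⬝ᵥ (u₁ + u₂) + (u₁ - u₂) ⬝ᵥ (u₁ - u₂) = 2 * (u₁ ⬝ᵥ u₁ + u₂ ⬝ᵥ u₂) := by
    simp only [add_dotProduct, dotProduct_add, sub_dotProduct, dotProduct_sub]
    ring
  have b1 := mul_le_mul_of_nonneg_right hm1 n1
  have b2 := mul_le_mul_of_nonneg_right hm2 n2
  have b3 := mul_nonneg hm n3
  have e' := congrArg (fun t => m * t) e
  linarith

lemma quad_shift {N : ℕ} {L : Matrix (Fin N) (Fin N) ℝ} (hL : L.PosSemidef)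
    (h1 : L *ᵥ (fun _ => 1) = 0) (x : Fin N → ℝ) (s : ℝ) :
    (x - s • (fun _ => (1 : ℝ))) ⬝ᵥ L *ᵥ (x - s • (fun _ => (1 : ℝ))) = x ⬝ᵥ L *ᵥ x := by
  have ht : Lᵀ = L := by simpa using hL.1.eq
  have h2 : (fun _ => (1 : ℝ)) ⬝ᵥ L *ᵥ x = 0 := by
    rw [dotProduct_mulVec, ← mulVec_transpose, ht, h1, zero_dotProduct]
  rw [mulVec_sub, mulVec_smul, h1, smul_zero, sub_zero, sub_dotProduct, smul_dotProduct, h2,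
    smul_zero, sub_zero]

lemma supra_quad {N : ℕ} (L₁ L₂ : Matrix (Fin N) (Fin N) ℝ) (a : ℝ) (x y : Fin N → ℝ) :
    (Sum.elim x y) ⬝ᵥ supraLaplacian L₁ L₂ (fun _ => a) *ᵥ (Sum.elim x y) =
      x ⬝ᵥ L₁ *ᵥ x + y ⬝ᵥ L₂ *ᵥ y + a * ((x - y) ⬝ᵥ (x - y)) := by
  have hd : (Matrix.diagonal (fun _ : Fin N => a)) = a • (1 : Matrix (Fin N) (Fin N) ℝ) := by
    rw [smul_one_eq_diagonal]
  rw [supraLaplacian, fromBlocks_mulVec, sumElim_dotProduct_sumElim, hd]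
  simp only [Sum.elim_comp_inl, Sum.elim_comp_inr, add_mulVec, neg_mulVec, smul_mulVec,
    one_mulVec, dotProduct_add, dotProduct_neg, dotProduct_smul, sub_dotProduct, dotProduct_sub,
    smul_eq_mul]
  ring

theorem stmt8 {N : ℕ} (hN : 2 ≤ N)
    (L₁ L₂ : Matrix (Fin N) (Fin N) ℝ)
    (hL₁ : L₁.PosSemidef) (hL₂ : L₂.PosSemidef)
    (hL₁1 : L₁ *ᵥ (fun _ => 1) = 0) (hL₂1 : L₂ *ᵥ (fun _ => 1) = 0) :
    (∀ u₁ u₂ : Fin N → ℝ, u₁ ⬝ᵥ (fun _ => 1) = 0 → u₂ ⬝ᵥ (fun _ => 1) = 0 →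
      u₁ ⬝ᵥ L₁ *ᵥ u₁ + u₂ ⬝ᵥ L₂ *ᵥ u₂ ≥
        (1 / 2) * min (lambda2 L₁) (lambda2 L₂) * ((u₁ + u₂) ⬝ᵥ (u₁ + u₂))) ∧
    (∀ c : ℝ, 0 ≤ c → c ≤ (N / 2) * min (lambda2 L₁) (lambda2 L₂) →
      lambda2 (supraLaplacian L₁ L₂ (fun _ => c / N)) = 2 * c / N) := by
  refine ⟨fun u₁ u₂ h₁ h₂ => part_one hL₁ hL₂ u₁ u₂ h₁ h₂, fun c hc0 hc => ?_⟩
  have hN0 : (0 : ℝ) < N := by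
    have : 0 < N := by omega
    exact_mod_cast this
  have hcard : (fun _ : Fin N => (1 : ℝ)) ⬝ᵥ (fun _ => 1) = N := by simp [dotProduct]
  have e2 : 2 * c / N = 2 * (c / N) := by ring
  have ha0 : 0 ≤ c / N := by positivity
  have ha : c / N ≤ (1 / 2) * min (lambda2 L₁) (lambda2 L₂) := by
    rw [div_le_iff₀ hN0]
    linarith
  rw [e2]
  generalize c / N = a at *
  apply IsLeast.csInf_eq
  constructor
  · set o : Fin N → ℝ := fun _ => 1 with ho
    set t : ℝ := (√(2 * N))⁻¹ with ht
    have htt : t * t * (2 * N) = 1 := by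
      have h2 : √(2 * (N : ℝ)) * √(2 * N) = 2 * N := Real.mul_self_sqrt (by positivity)
      have h3 : 0 < √(2 * (N : ℝ)) := Real.sqrt_pos.mpr (by positivity)
      rw [ht, ← mul_inv, h2]
      field_simp
    refine ⟨Sum.elim (t • o) (-(t • o)), ?_, ?_, ?_⟩
    · rw [sumElim_dotProduct_sumElim]
      simp only [neg_dotProduct, dotProduct_neg, smul_dotProduct, dotProduct_smul, hcard,
        smul_eq_mul]
      linarith
    · simp [dotProduct, ho]
    · rw [supra_quad]
      simp only [mulVec_neg, mulVec_smul, hL₁1, hL₂1, smul_zero, dotProduct_zero, neg_zero,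
        sub_neg_eq_add, add_dotProduct, dotProduct_add, smul_dotProduct, dotProduct_smul, hcard,
        smul_eq_mul]
      linear_combination (-2 * a) * htt
  · rintro z ⟨v, hv1, hv0, rfl⟩
    obtain ⟨x, y, rfl⟩ : ∃ x y : Fin N → ℝ, v = Sum.elim x y :=
      ⟨v ∘ Sum.inl, v ∘ Sum.inr, by simp⟩
    rw [supra_quad]
    rw [sumElim_dotProduct_sumElim] at hv1
    have hv0' : x ⬝ᵥ (fun _ => 1) + y ⬝ᵥ (fun _ => 1) = 0 := by
      simpa [dotProduct] using hv0
    set o : Fin N → ℝ := fun _ => 1 with ho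
    set s : ℝ := (x ⬝ᵥ o) / N with hs
    have hsN : s * N = x ⬝ᵥ o := by rw [hs]; field_simp
    have q1 : (x - s • o) ⬝ᵥ o = 0 := by
      rw [sub_dotProduct, smul_dotProduct, hcard, smul_eq_mul]; linarith
    have q2 : (y - (-s) • o) ⬝ᵥ o = 0 := by
      rw [sub_dotProduct, smul_dotProduct, hcard, smul_eq_mul]; linarith
    have key := part_one hL₁ hL₂ _ _ q1 q2
    rw [quad_shift hL₁ hL₁1, quad_shift hL₂ hL₂1] at key
    have e : x - s • o + (y - (-s) • o) = x + y := by
      rw [neg_smul]; abel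
    rw [e] at key
    have n : 0 ≤ (x + y) ⬝ᵥ (x + y) := Finset.sum_nonneg (fun i _ => mul_self_nonneg ((x + y) i))
    have k2 := mul_le_mul_of_nonneg_right ha n
    have e3 : (x + y) ⬝ᵥ (x + y) + (x - y) ⬝ᵥ (x - y) = 2 := by
      simp only [add_dotProduct, dotProduct_add, sub_dotProduct, dotProduct_sub]
      linarith
    have e4 := congrArg (fun t => a * t) e3
    linarith
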